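/- arXiv:1908.01943 — 2 statements merged into one kernel-verified Lean document; each statement's English description precedes it below -/
import Mathlib

section
/- Let X and Y be random vectors in ℝⁿ that are elliptically distributed with the same location μ ∈ ℝⁿ and the same characteristic generator φ, with dispersion matrices Σ_x and Σ_y respectively, and let A = I_n − (1/n)·1_{n×n} be the n×n centering matrix. If A Σ_x Aᵀ ⪯ A Σ_y Aᵀ, then G_n(AX − Aμ) ≤_st G_n(AY − Aμ). In particular, if μ = c·1_n for some c ∈ ℝ (including μ = 0), then G_n(X) ≤_st G_n(Y). -/
open MeasureTheory ProbabilityTheory Matrix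

/-- Gini index of `x ∈ ℝⁿ`: `G_n(x) = (1/n²) ∑_i ∑_j |x_i − x_j|`. -/
noncomputable def gini {n : ℕ} (x : Fin n → ℝ) : ℝ :=
  (1 / (n : ℝ) ^ 2) * ∑ i, ∑ j, |x i - x j|

/-- Characteristic function of a random vector `X : Ω → ℝⁿ` at `t ∈ ℝⁿ`:
`E[exp(i⟨t,X⟩)]`. -/
noncomputable def charFn {Ω : Type*} [MeasurableSpace Ω] {n : ℕ}
    (P : Measure Ω) (X : Ω → (Fin n → ℝ)) (t : Fin n → ℝ) : ℂ :=
  ∫ ω, Complex.exp (((∑ i, t i * X ω i : ℝ) : ℂ) * Complex.I) ∂P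

/-- The centering matrix `A = Iₙ − (1/n)·1_{n×n}`. -/
noncomputable def centeringMatrix (n : ℕ) : Matrix (Fin n) (Fin n) ℝ :=
  1 - ((n : ℝ)⁻¹) • Matrix.of (fun _ _ => (1 : ℝ))

/-!
Both statements are about the peakedness order: `μ` is more peaked than `ν` if every absolutely
convex set is charged at least as much by `μ`. The Gini index is a seminorm, so its sublevel sets
are absolutely convex, and it suffices that an elliptical law becomes less peaked when its
dispersion increases.

Factoring the larger dispersion as `S ^ 2` and passing to coordinates on the range of `S`, one may
assume that the less peaked law is spherical and that the other is its image under a positive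
contraction. A positive contraction is a composition of one-dimensional contractions
("stretches") along the vectors of an orthonormal basis, so consider a single stretch along `e`.

After smoothing, the spherical law has a radial `C¹` density `k`. Pulled back to a fixed absolutely
convex `C`, the derivative in `s` of the mass of the `s`-stretched set is a positive multiple of
`∫ (k x + ⟪e, x⟫ * ∂ₑ k x)` over a stretched copy of `C`. The integrand is the second derivative
along `e` of a radially increasing potential `Ψ`, and by Anderson's inequality, a consequence of
the Prékopa–Leindler inequality, the integral of `Ψ (x + h • e)` is minimal at `h = 0`. Hence the
derivative is nonnegative.
-/

open Set Filter Module
open scoped ENNReal Topology RealInnerProductSpace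

section PrekopaLeindler

lemma volume_add_le_two_mul_of_isCompact {K L S : Set ℝ} (hK : IsCompact K) (hL : IsCompact L)
    (hK₀ : K.Nonempty) (hL₀ : L.Nonempty) (hS : ∀ a ∈ K, ∀ b ∈ L, midpoint ℝ a b ∈ S) :
    volume K + volume L ≤ 2 * volume S := by
  obtain ⟨a, haK, ha⟩ := hK.exists_isGreatest hK₀
  obtain ⟨b, hbL, hb⟩ := hL.exists_isLeast hL₀
  have hS' : volume ((fun x ↦ (1 / 2 : ℝ) * x) ⁻¹' S) = 2 * volume S := by
    rw [Real.volume_preimage_mul_left (by norm_num)]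
    norm_num
  -- `K + b` and `L + a` lie in `2 • S` and meet only at `a + b`.
  have hsub : (· - b) ⁻¹' K ∪ (· - a) ⁻¹' L ⊆ (fun x ↦ (1 / 2 : ℝ) * x) ⁻¹' S := by
    rintro x (hx | hx)
    · have := hS _ hx b hbL
      rwa [midpoint_eq_smul_add, sub_add_cancel, smul_eq_mul, invOf_eq_inv, ← one_div] at this
    · have := hS a haK _ hx
      rwa [midpoint_eq_smul_add, add_sub_cancel, smul_eq_mul, invOf_eq_inv, ← one_div] at this
  have hdisj : AEDisjoint volume ((· - b) ⁻¹' K) ((· - a) ⁻¹' L) := by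
    refine measure_mono_null (t := {a + b}) (fun x ⟨hxK, hxL⟩ ↦ ?_) Real.volume_singleton
    have h₁ := ha hxK
    have h₂ := hb hxL
    rw [mem_singleton_iff]
    linarith
  calc volume K + volume L
      = volume ((· - b) ⁻¹' K) + volume ((· - a) ⁻¹' L) := by
        simp only [sub_eq_add_neg, measure_preimage_add_right]
    _ = volume ((· - b) ⁻¹' K ∪ (· - a) ⁻¹' L) :=
        (measure_union₀ (hL.measurableSet.preimage (by fun_prop)).nullMeasurableSet hdisj).symm
    _ ≤ 2 * volume S := hS' ▸ measure_mono hsub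

lemma volume_add_le_two_mul {A B S : Set ℝ} (hA : MeasurableSet A) (hB : MeasurableSet B)
    (hA₀ : A.Nonempty) (hB₀ : B.Nonempty) (hS : ∀ a ∈ A, ∀ b ∈ B, midpoint ℝ a b ∈ S) :
    volume A + volume B ≤ 2 * volume S := by
  obtain ⟨a, ha⟩ := hA₀
  obtain ⟨b, hb⟩ := hB₀
  have hcpt : ∀ K ⊆ A, IsCompact K → ∀ L ⊆ B, IsCompact L →
      volume K + volume L ≤ 2 * volume S := fun K hKA hK L hLB hL ↦
    calc volume K + volume L ≤ volume (insert a K) + volume (insert b L) := by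
          gcongr <;> exact subset_insert _ _
      _ ≤ 2 * volume S := volume_add_le_two_mul_of_isCompact (hK.insert a) (hL.insert b)
          (insert_nonempty _ _) (insert_nonempty _ _) fun x hx y hy ↦
            hS x (insert_subset ha hKA hx) y (insert_subset hb hLB hy)
  rw [hA.measure_eq_iSup_isCompact, hB.measure_eq_iSup_isCompact]
  simp only [iSup_and']
  exact ENNReal.biSup_add_biSup_le' ⟨∅, empty_subset _, isCompact_empty⟩
    ⟨∅, empty_subset _, isCompact_empty⟩ fun K hK L hL ↦ hcpt K hK.1 hK.2 L hL.1 hL.2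

lemma volume_Ioi_inter_ofReal_lt (c : ℝ≥0∞) :
    volume (Ioi 0 ∩ {t : ℝ | ENNReal.ofReal t < c}) = c := by
  rcases eq_or_ne c ∞ with rfl | hc
  · simp
  · have : Ioi 0 ∩ {t : ℝ | ENNReal.ofReal t < c} = Ioo 0 c.toReal := by
      ext t
      exact and_congr_right fun ht : 0 < t ↦ ENNReal.ofReal_lt_iff_lt_toReal ht.le hc
    rw [this, Real.volume_Ioo, sub_zero, ENNReal.ofReal_toReal hc]

lemma lintegral_eq_lintegral_meas_ofReal_lt {α : Type*} [MeasurableSpace α] {μ : Measure α}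
    [SFinite μ] {f : α → ℝ≥0∞} (hf : Measurable f) :
    ∫⁻ a, f a ∂μ = ∫⁻ t in Ioi (0 : ℝ), μ {a | ENNReal.ofReal t < f a} := by
  have hm : MeasurableSet {p : α × ℝ | ENNReal.ofReal p.2 < f p.1} :=
    measurableSet_lt (by fun_prop) (by fun_prop)
  calc ∫⁻ a, f a ∂μ
      = ∫⁻ a, volume.restrict (Ioi 0) {t : ℝ | ENNReal.ofReal t < f a} ∂μ := by
        refine lintegral_congr fun a ↦ ?_
        rw [Measure.restrict_apply (measurableSet_lt (by fun_prop) (by fun_prop)), inter_comm,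
          volume_Ioi_inter_ofReal_lt]
    _ = μ.prod (volume.restrict (Ioi 0)) {p | ENNReal.ofReal p.2 < f p.1} :=
        (Measure.prod_apply hm).symm
    _ = ∫⁻ t in Ioi (0 : ℝ), μ {a | ENNReal.ofReal t < f a} := Measure.prod_apply_symm hm

lemma lintegral_add_le_two_mul_of_iSup_eq_one {f g h : ℝ → ℝ≥0∞} (hf : Measurable f)
    (hg : Measurable g) (hh : Measurable h) (hf₁ : ⨆ x, f x = 1) (hg₁ : ⨆ x, g x = 1)
    (H : ∀ x y, f x * g y ≤ h (midpoint ℝ x y) ^ 2) :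
    (∫⁻ x, f x) + ∫⁻ x, g x ≤ 2 * ∫⁻ x, h x := by
  have hlevel : ∀ t : ℝ, volume {x | ENNReal.ofReal t < f x} + volume {x | ENNReal.ofReal t < g x}
      ≤ 2 * volume {x | ENNReal.ofReal t < h x} := by
    intro t
    rcases lt_or_ge (ENNReal.ofReal t) 1 with ht | ht
    · refine volume_add_le_two_mul (measurableSet_lt measurable_const hf)
        (measurableSet_lt measurable_const hg) (lt_iSup_iff.1 (ht.trans_eq hf₁.symm))
        (lt_iSup_iff.1 (ht.trans_eq hg₁.symm)) fun a ha b hb ↦ ?_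
      refine (ENNReal.pow_right_strictMono two_ne_zero).lt_iff_lt.1 ?_
      exact (sq (ENNReal.ofReal t) ▸ ENNReal.mul_lt_mul ha hb).trans_le (H a b)
    · have hempty : ∀ u : ℝ → ℝ≥0∞, ⨆ x, u x = 1 → {x | ENNReal.ofReal t < u x} = ∅ :=
        fun u hu ↦ eq_empty_of_forall_notMem fun x hx ↦
          (hx.trans_le (hu ▸ le_iSup u x)).not_ge ht
      simp [hempty f hf₁, hempty g hg₁]
  have hanti : Measurable fun t : ℝ ↦ volume {x | ENNReal.ofReal t < f x} :=
    Antitone.measurable fun s t hst ↦ measure_mono fun x (hx : _ < _) ↦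
      (ENNReal.ofReal_le_ofReal hst).trans_lt hx
  rw [lintegral_eq_lintegral_meas_ofReal_lt hf, lintegral_eq_lintegral_meas_ofReal_lt hg,
    lintegral_eq_lintegral_meas_ofReal_lt hh, ← lintegral_add_left hanti,
    ← lintegral_const_mul' _ _ ENNReal.ofNat_ne_top]
  exact lintegral_mono hlevel

lemma four_mul_mul_le_add_sq (a b : ℝ≥0∞) : 4 * (a * b) ≤ (a + b) ^ 2 := by
  wlog h : a ≤ b generalizing a b
  · rw [mul_comm a, add_comm a]
    exact this b a (le_of_not_ge h)
  obtain ⟨c, rfl⟩ := exists_add_of_le h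
  calc 4 * (a * (a + c)) ≤ 4 * (a * (a + c)) + c ^ 2 := le_self_add
    _ = (a + (a + c)) ^ 2 := by ring

lemma lintegral_mul_le_sq_of_iSup_ne_top {f g h : ℝ → ℝ≥0∞} (hf : Measurable f)
    (hg : Measurable g) (hh : Measurable h) (hf_top : ⨆ x, f x ≠ ∞) (hg_top : ⨆ x, g x ≠ ∞)
    (H : ∀ x y, f x * g y ≤ h (midpoint ℝ x y) ^ 2) :
    (∫⁻ x, f x) * ∫⁻ x, g x ≤ (∫⁻ x, h x) ^ 2 := by
  set α := ⨆ x, f x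
  set β := ⨆ x, g x
  rcases eq_or_ne α 0 with hα | hα
  · simp [ENNReal.iSup_eq_zero.1 hα]
  rcases eq_or_ne β 0 with hβ | hβ
  · simp [ENNReal.iSup_eq_zero.1 hβ]
  set γ := (α * β) ^ (1 / 2 : ℝ)
  have hγ : γ⁻¹ ^ 2 = α⁻¹ * β⁻¹ := by
    rw [← ENNReal.mul_inv (.inl hα) (.inl hf_top), ← ENNReal.inv_pow, ← ENNReal.rpow_natCast,
      ← ENNReal.rpow_mul]
    norm_num
  have hsum : α⁻¹ * (∫⁻ x, f x) + β⁻¹ * ∫⁻ x, g x ≤ 2 * (γ⁻¹ * ∫⁻ x, h x) := by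
    simp only [← lintegral_const_mul _ hf, ← lintegral_const_mul _ hg, ← lintegral_const_mul _ hh]
    refine lintegral_add_le_two_mul_of_iSup_eq_one (hf.const_mul _) (hg.const_mul _)
      (hh.const_mul _) ?_ ?_ fun x y ↦ ?_
    · rw [← ENNReal.mul_iSup, ENNReal.inv_mul_cancel hα hf_top]
    · rw [← ENNReal.mul_iSup, ENNReal.inv_mul_cancel hβ hg_top]
    · rw [mul_mul_mul_comm, mul_pow, hγ]
      gcongr
      exact H x y
  have hαβ : α⁻¹ * β⁻¹ ≠ 0 := mul_ne_zero (by simpa) (by simpa)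
  have hαβ' : α⁻¹ * β⁻¹ ≠ ∞ := ENNReal.mul_ne_top (by simpa) (by simpa)
  refine (ENNReal.mul_le_mul_iff_right (mul_ne_zero four_ne_zero hαβ)
    (ENNReal.mul_ne_top ENNReal.ofNat_ne_top hαβ')).1 ?_
  calc 4 * (α⁻¹ * β⁻¹) * ((∫⁻ x, f x) * ∫⁻ x, g x)
      = 4 * ((α⁻¹ * ∫⁻ x, f x) * (β⁻¹ * ∫⁻ x, g x)) := by ring
    _ ≤ (α⁻¹ * (∫⁻ x, f x) + β⁻¹ * ∫⁻ x, g x) ^ 2 := four_mul_mul_le_add_sq _ _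
    _ ≤ (2 * (γ⁻¹ * ∫⁻ x, h x)) ^ 2 := by gcongr
    _ = 4 * (α⁻¹ * β⁻¹) * (∫⁻ x, h x) ^ 2 := by rw [← hγ]; ring

/-- A measure has the Prékopa–Leindler property if the Prékopa–Leindler inequality with weights
`1/2` and `1/2` holds for it; the square avoids a square root on the right-hand side. -/
def PrekopaLeindler {E : Type*} [AddCommGroup E] [Module ℝ E] [MeasurableSpace E]
    (μ : Measure E) : Prop :=
  ∀ ⦃f g h : E → ℝ≥0∞⦄, Measurable f → Measurable g → Measurable h →
    (∀ x y, f x * g y ≤ h (midpoint ℝ x y) ^ 2) →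
      (∫⁻ x, f x ∂μ) * ∫⁻ x, g x ∂μ ≤ (∫⁻ x, h x ∂μ) ^ 2

namespace PrekopaLeindler

lemma volume_real : PrekopaLeindler (volume : Measure ℝ) := by
  intro f g h hf hg hh H
  have htrunc : ∀ u : ℝ → ℝ≥0∞, Measurable u → ∫⁻ x, u x = ⨆ N : ℕ, ∫⁻ x, min (u x) N := by
    intro u hu
    rw [← lintegral_iSup (fun N ↦ hu.min measurable_const)
      fun m n hmn x ↦ min_le_min le_rfl (Nat.cast_le.2 hmn)]
    refine lintegral_congr fun x ↦ ?_
    rw [← inf_iSup_eq, ENNReal.iSup_natCast, inf_top_eq]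
  have hbdd : ∀ (u : ℝ → ℝ≥0∞) (N : ℕ), ⨆ x, min (u x) N ≠ ∞ := fun u N ↦
    ne_top_of_le_ne_top (ENNReal.natCast_ne_top N) (iSup_le fun _ ↦ min_le_right _ _)
  rw [htrunc f hf, htrunc g hg, ENNReal.iSup_mul]
  refine iSup_le fun N ↦ ?_
  rw [ENNReal.mul_iSup]
  refine iSup_le fun M ↦ ?_
  exact lintegral_mul_le_sq_of_iSup_ne_top (hf.min measurable_const) (hg.min measurable_const) hh
    (hbdd f N) (hbdd g M) fun x y ↦
      (mul_le_mul' (min_le_left _ _) (min_le_left _ _)).trans (H x y)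

variable {E F : Type*} [AddCommGroup E] [Module ℝ E] [MeasurableSpace E]
  [AddCommGroup F] [Module ℝ F] [MeasurableSpace F] {μ : Measure E} {ν : Measure F}

lemma dirac_zero : PrekopaLeindler (Measure.dirac (0 : E)) := by
  intro f g h hf hg hh H
  simpa only [lintegral_dirac' _ hf, lintegral_dirac' _ hg, lintegral_dirac' _ hh, midpoint_self]
    using H 0 0

lemma prod [SFinite ν] (hμ : PrekopaLeindler μ) (hν : PrekopaLeindler ν) :
    PrekopaLeindler (μ.prod ν) := by
  intro f g h hf hg hh H
  rw [lintegral_prod _ hf.aemeasurable, lintegral_prod _ hg.aemeasurable,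
    lintegral_prod _ hh.aemeasurable]
  refine hμ hf.lintegral_prod_right' hg.lintegral_prod_right' hh.lintegral_prod_right'
    fun x x' ↦ ?_
  exact hν (hf.comp measurable_prodMk_left) (hg.comp measurable_prodMk_left)
    (hh.comp measurable_prodMk_left) fun y y' ↦ H (x, y) (x', y')

lemma of_measurePreserving (hμ : PrekopaLeindler μ) {e : E → F} (he : MeasurePreserving e μ ν)
    (hmid : ∀ x y, e (midpoint ℝ x y) = midpoint ℝ (e x) (e y)) : PrekopaLeindler ν := by
  intro f g h hf hg hh H
  rw [← he.lintegral_comp hf, ← he.lintegral_comp hg, ← he.lintegral_comp hh]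
  exact hμ (hf.comp he.measurable) (hg.comp he.measurable) (hh.comp he.measurable) fun x y ↦ by
    rw [hmid]
    exact H _ _

lemma volume_pi : ∀ n : ℕ, PrekopaLeindler (volume : Measure (Fin n → ℝ))
  | 0 => by
    rw [MeasureTheory.volume_pi, Measure.pi_of_empty _ 0]
    exact dirac_zero
  | n + 1 => by
    have := (volume_real.prod (volume_pi n)).of_measurePreserving
      (volume_preserving_piFinSuccAbove (fun _ : Fin (n + 1) ↦ ℝ) 0).symm
    refine this fun x y ↦ ?_
    ext i
    refine Fin.cases ?_ (fun j ↦ ?_) i <;>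
    simp [midpoint_eq_smul_add, mul_add]

lemma volume_of_finiteDimensional (E : Type*) [NormedAddCommGroup E] [InnerProductSpace ℝ E]
    [FiniteDimensional ℝ E] [MeasurableSpace E] [BorelSpace E] :
    PrekopaLeindler (volume : Measure E) := by
  refine (volume_pi (finrank ℝ E)).of_measurePreserving
    (((stdOrthonormalBasis ℝ E).measurePreserving_repr_symm).comp
      (PiLp.volume_preserving_toLp (Fin (finrank ℝ E)))) fun x y ↦ ?_
  simp only [midpoint_eq_smul_add, Function.comp_apply, WithLp.toLp_smul, WithLp.toLp_add, map_smul,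
    map_add]

end PrekopaLeindler

end PrekopaLeindler

section Anderson

section AbsConvex

variable {E F : Type*} [AddCommGroup E] [Module ℝ E] [AddCommGroup F] [Module ℝ F]

lemma absConvex_iff_convex_and_neg_mem {s : Set E} :
    AbsConvex ℝ s ↔ Convex ℝ s ∧ ∀ x ∈ s, -x ∈ s :=
  ⟨fun hs ↦ ⟨hs.2, fun _ ↦ hs.1.neg_mem_iff.2⟩,
    fun hs ↦ ⟨(balanced_iff_neg_mem hs.1).2 hs.2, hs.1⟩⟩

lemma absConvex_preimage {s : Set F} (hs : AbsConvex ℝ s) (f : E →ₗ[ℝ] F) :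
    AbsConvex ℝ (f ⁻¹' s) :=
  absConvex_iff_convex_and_neg_mem.2
    ⟨hs.2.linear_preimage f, fun x hx ↦ by simpa [hs.1.neg_mem_iff] using hx⟩

lemma midpoint_mem_of_neg_mem {s : Set E} (hs : AbsConvex ℝ s) {x y : E} (hx : x ∈ s)
    (hy : -y ∈ s) : midpoint ℝ x y ∈ s :=
  hs.2.midpoint_mem hx (hs.1.neg_mem_iff.1 hy)

end AbsConvex

section Measure

variable {E : Type*} [AddCommGroup E] [Module ℝ E] [MeasurableSpace E] [MeasurableAdd E]
  {μ : Measure E} {C K : Set E}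

-- The translates `F = C ∩ (K - v)` and `-F` have the same measure, and midpoints of points of
-- `F` and `-F` lie in `C ∩ K`.
lemma PrekopaLeindler.measure_inter_preimage_add_le [MeasurableNeg E] [μ.IsNegInvariant]
    (hμ : PrekopaLeindler μ) (hC : AbsConvex ℝ C) (hK : AbsConvex ℝ K) (hCm : MeasurableSet C)
    (hKm : MeasurableSet K) (v : E) : μ (C ∩ (· + v) ⁻¹' K) ≤ μ (C ∩ K) := by
  set F := C ∩ (· + v) ⁻¹' K
  have hF : MeasurableSet F := hCm.inter (hKm.preimage (measurable_add_const v))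
  have hCK : MeasurableSet (C ∩ K) := hCm.inter hKm
  have hmid : ∀ x ∈ F, ∀ y ∈ -F, midpoint ℝ x y ∈ C ∩ K := by
    rintro x ⟨hxC, hxK⟩ y ⟨hyC, hyK⟩
    refine ⟨midpoint_mem_of_neg_mem hC hxC hyC, ?_⟩
    have := midpoint_mem_of_neg_mem hK hxK (y := y - v) (by simpa [neg_add_eq_sub] using hyK)
    rwa [midpoint_eq_smul_add, add_add_sub_cancel, ← midpoint_eq_smul_add] at this
  have hsq := hμ (f := F.indicator 1) (g := (-F).indicator 1) (h := (C ∩ K).indicator 1)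
    (measurable_one.indicator hF) (measurable_one.indicator hF.neg)
    (measurable_one.indicator hCK) fun x y ↦ by
      by_cases hx : x ∈ F
      · by_cases hy : y ∈ -F
        · simp [hx, indicator_of_mem hy, indicator_of_mem (hmid x hx y hy)]
        · simp [indicator_of_notMem hy]
      · simp [hx]
  rw [lintegral_indicator_one hF, lintegral_indicator_one hF.neg, lintegral_indicator_one hCK,
    Measure.measure_neg, ← sq] at hsq
  exact (ENNReal.pow_right_strictMono two_ne_zero).le_iff_le.1 hsq

lemma PrekopaLeindler.setLIntegral_le_setLIntegral_add [MeasurableNeg E] [μ.IsNegInvariant]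
    [SFinite μ] (hμ : PrekopaLeindler μ) (hC : AbsConvex ℝ C) (hCm : MeasurableSet C)
    (hC_top : μ C ≠ ∞) {q : E → ℝ≥0∞} (hq : Measurable q) (hqc : ∀ t, AbsConvex ℝ {x | q x ≤ t})
    (v : E) : ∫⁻ x in C, q x ∂μ ≤ ∫⁻ x in C, q (x + v) ∂μ := by
  have hqv : Measurable fun x ↦ q (x + v) := hq.comp (measurable_add_const v)
  have hsdiff : ∀ K : Set E, MeasurableSet K → μ (C \ K) = μ C - μ (C ∩ K) := fun K hK ↦
    ENNReal.eq_sub_of_add_eq' hC_top (by rw [add_comm, measure_inter_add_sdiff C hK])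
  have hlevel : ∀ (u : E → ℝ≥0∞) (t : ℝ≥0∞), Measurable u →
      μ.restrict C {x | t < u x} = μ (C \ {x | u x ≤ t}) := fun u t hu ↦ by
    rw [Measure.restrict_apply (measurableSet_lt measurable_const hu), sdiff_eq, inter_comm,
      compl_ofPred]
    simp only [not_le]
  rw [lintegral_eq_lintegral_meas_ofReal_lt hq,
    lintegral_eq_lintegral_meas_ofReal_lt hqv]
  refine lintegral_mono fun t ↦ ?_
  rw [hlevel _ _ hq, hlevel _ _ hqv,
    hsdiff _ (measurableSet_le hq measurable_const),
    hsdiff _ (measurableSet_le hqv measurable_const)]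
  exact tsub_le_tsub_left (hμ.measure_inter_preimage_add_le hC (hqc _) hCm
    (measurableSet_le hq measurable_const) v) _

end Measure

lemma setIntegral_le_setIntegral_add {E : Type*} [NormedAddCommGroup E] [InnerProductSpace ℝ E]
    [FiniteDimensional ℝ E] [MeasurableSpace E] [BorelSpace E] {C : Set E} (hC : AbsConvex ℝ C)
    (hCc : IsCompact C) {q : E → ℝ} (hq : Continuous q) (hq₀ : ∀ x, 0 ≤ q x)
    (hqc : ∀ t, AbsConvex ℝ {x | q x ≤ t}) (v : E) :
    ∫ x in C, q x ≤ ∫ x in C, q (x + v) := by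
  have hqv : Continuous fun x ↦ q (x + v) := by fun_prop
  have hqc' : ∀ t : ℝ≥0∞, AbsConvex ℝ {x | ENNReal.ofReal (q x) ≤ t} := fun t ↦ by
    rcases eq_or_ne t ∞ with rfl | ht
    · simpa using AbsConvex.univ
    · simpa only [ENNReal.ofReal_le_iff_le_toReal ht] using hqc t.toReal
  rw [← ENNReal.ofReal_le_ofReal_iff (integral_nonneg fun x ↦ hq₀ (x + v)),
    ofReal_integral_eq_lintegral_ofReal (hq.continuousOn.integrableOn_compact hCc)
      (ae_of_all _ hq₀),
    ofReal_integral_eq_lintegral_ofReal (hqv.continuousOn.integrableOn_compact hCc)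
      (ae_of_all _ fun x ↦ hq₀ (x + v))]
  exact (PrekopaLeindler.volume_of_finiteDimensional E).setLIntegral_le_setLIntegral_add hC
    hCc.measurableSet hCc.measure_ne_top hq.measurable.ennreal_ofReal hqc' v

end Anderson

section SecondVariation

lemma deriv_deriv_nonneg_of_isLocalMin {f : ℝ → ℝ} {x : ℝ} (hf : IsLocalMin f x)
    (hc : ContinuousAt f x) : 0 ≤ deriv (deriv f) x := by
  by_contra! hneg
  -- By the second-derivative test `x` is also a local maximum, so `f` is constant near `x`.
  have hmax : IsLocalMax f x := isLocalMax_of_deriv_deriv_neg hneg hf.deriv_eq_zero hc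
  have hconst : f =ᶠ[𝓝 x] fun _ ↦ f x := by
    filter_upwards [hf, hmax] with y hy₁ hy₂ using le_antisymm hy₂ hy₁
  have hzero : deriv (deriv f) x = 0 := by simp [hconst.deriv.deriv_eq]
  exact hneg.ne hzero

lemma hasDerivAt_setIntegral_of_isCompact {X : Type*} [TopologicalSpace X] [T2Space X]
    [MeasurableSpace X] [BorelSpace X] {μ : Measure X} [IsFiniteMeasureOnCompacts μ] {C : Set X}
    (hC : IsCompact C) {F F' : ℝ → X → ℝ}
    (hF : Continuous (Function.uncurry F)) (hF' : Continuous (Function.uncurry F'))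
    (hderiv : ∀ s x, HasDerivAt (F · x) (F' s x) s) (s : ℝ) :
    HasDerivAt (fun s ↦ ∫ x in C, F s x ∂μ) (∫ x in C, F' s x ∂μ) s := by
  obtain ⟨M, hM⟩ := ((isCompact_closedBall s 1).prod hC).exists_bound_of_continuousOn
    hF'.continuousOn
  have hF_cont : ∀ t, Continuous (F t) := fun t ↦ hF.comp (Continuous.prodMk_right t)
  have hF'_cont : Continuous (F' s) := hF'.comp (Continuous.prodMk_right s)
  refine (hasDerivAt_integral_of_dominated_loc_of_deriv_le (bound := fun _ ↦ M)
    (Metric.closedBall_mem_nhds s one_pos) (.of_forall fun t ↦ (hF_cont t).aestronglyMeasurable)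
    ((hF_cont s).continuousOn.integrableOn_compact hC) hF'_cont.aestronglyMeasurable
    ?_ (integrableOn_const hC.measure_ne_top) (ae_of_all _ fun x t _ ↦ hderiv t x)).2
  filter_upwards [ae_restrict_mem hC.measurableSet] with x hx t ht using hM (t, x) ⟨ht, hx⟩

variable {E : Type*} [NormedAddCommGroup E] [InnerProductSpace ℝ E]

/-- A function on a normed space is radial if its value at a point depends only on the norm of that
point. -/
def IsRadial (k : E → ℝ) : Prop := ∀ x y, ‖x‖ = ‖y‖ → k x = k y

/-- The radial function with gradient `k x • x` at `x`, for a radial function `k` and a unit vector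
`e` along which the values of `k` are read off. -/
noncomputable def radialPotential (k : E → ℝ) (e x : E) : ℝ :=
  1 / 2 * ∫ u in 0..‖x‖ ^ 2, k (√u • e)

variable {k : E → ℝ} {e : E} {C : Set E}

lemma IsRadial.hasFDerivAt_radialPotential (hk : IsRadial k) (hkc : Continuous k) (he : ‖e‖ = 1)
    (x : E) : HasFDerivAt (radialPotential k e) (k x • innerSL ℝ x) x := by
  have hkx : k (√(‖x‖ ^ 2) • e) = k x :=
    hk _ _ (by rw [norm_smul, he, mul_one, Real.sqrt_sq (norm_nonneg x), norm_norm])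
  have hcont : Continuous fun u ↦ k (√u • e) := by fun_prop
  have hprim := intervalIntegral.integral_hasDerivAt_right (hcont.intervalIntegrable 0 (‖x‖ ^ 2))
    (hcont.stronglyMeasurableAtFilter _ _) hcont.continuousAt
  have := ((hprim.comp_hasFDerivAt x (hasStrictFDerivAt_norm_sq x).hasFDerivAt).const_mul
    (1 / 2 : ℝ))
  rw [hkx] at this
  refine this.congr_fderiv ?_
  rw [← Nat.cast_smul_eq_nsmul ℝ, smul_smul, smul_smul, Nat.cast_ofNat]
  ring_nf

lemma radialPotential_le_of_norm_le (hkc : Continuous k) (hk₀ : ∀ x, 0 ≤ k x) (e : E) {x y : E}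
    (hxy : ‖x‖ ≤ ‖y‖) : radialPotential k e x ≤ radialPotential k e y := by
  have hcont : Continuous fun u ↦ k (√u • e) := by fun_prop
  refine mul_le_mul_of_nonneg_left ?_ one_half_pos.le
  exact intervalIntegral.integral_mono_interval le_rfl (sq_nonneg _) (by gcongr)
    (ae_of_all _ fun u ↦ hk₀ _) (hcont.intervalIntegrable _ _)

lemma absConvex_sublevel_of_norm_mono {q : E → ℝ} (hq : ∀ x y, ‖x‖ ≤ ‖y‖ → q x ≤ q y) (t : ℝ) :
    AbsConvex ℝ {x | q x ≤ t} := by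
  refine absConvex_iff_convex_and_neg_mem.2
    ⟨convex_iff_segment_subset.2 fun x hx y hy z hz ↦ ?_, fun x hx ↦ ?_⟩
  · rcases le_max_iff.1 (convexOn_univ_norm.le_max_of_mem_segment (mem_univ x) (mem_univ y) hz)
      with h | h
    · exact (hq _ _ h).trans hx
    · exact (hq _ _ h).trans hy
  · exact (hq _ _ (norm_neg x).le).trans hx

variable [FiniteDimensional ℝ E] [MeasurableSpace E] [BorelSpace E]

-- The integral is the second derivative at `h = 0` of `∫ x in C, Ψ (x + h • e)`, `Ψ` being the
-- radial potential of `k`, and by Anderson's inequality this function is minimal at `h = 0`.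
lemma IsRadial.setIntegral_add_inner_mul_fderiv_nonneg (hk : IsRadial k) (hk₁ : ContDiff ℝ 1 k)
    (hk₀ : ∀ x, 0 ≤ k x) (he : ‖e‖ = 1) (hC : AbsConvex ℝ C) (hCc : IsCompact C) :
    0 ≤ ∫ x in C, (k x + inner ℝ e x * fderiv ℝ k x e) := by
  set Ψ := radialPotential k e
  have hkc : Continuous k := hk₁.continuous
  have hdkc : Continuous fun x ↦ fderiv ℝ k x e :=
    (hk₁.continuous_fderiv one_ne_zero).clm_apply continuous_const
  have hΨ : ∀ x, HasFDerivAt Ψ (k x • innerSL ℝ x) x := hk.hasFDerivAt_radialPotential hkc he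
  have hΨc : Continuous Ψ := continuous_iff_continuousAt.2 fun x ↦ (hΨ x).continuousAt
  have hline : ∀ (x : E) (h : ℝ), HasDerivAt (fun h : ℝ ↦ x + h • e) e h := fun x h ↦ by
    simpa using ((hasDerivAt_id h).smul_const e).const_add x
  have hd₁ : ∀ h, HasDerivAt (fun h : ℝ ↦ ∫ x in C, Ψ (x + h • e))
      (∫ x in C, k (x + h • e) * inner ℝ e (x + h • e)) h :=
    hasDerivAt_setIntegral_of_isCompact hCc (hΨc.comp (by fun_prop)) (by fun_prop) fun h x ↦
      ((hΨ _).comp_hasDerivAt h (hline x h)).congr_deriv (by rw [real_inner_comm]; rfl)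
  have hd₂ : HasDerivAt (fun h : ℝ ↦ ∫ x in C, k (x + h • e) * inner ℝ e (x + h • e))
      (∫ x in C, (fderiv ℝ k (x + (0 : ℝ) • e) e * inner ℝ e (x + (0 : ℝ) • e)
        + k (x + (0 : ℝ) • e))) 0 := by
    refine hasDerivAt_setIntegral_of_isCompact hCc
      (F' := fun h x ↦ fderiv ℝ k (x + h • e) e * inner ℝ e (x + h • e) + k (x + h • e))
      (by fun_prop) (((hdkc.comp (by fun_prop)).mul (by fun_prop)).add (by fun_prop))
      (fun h x ↦ ?_) 0
    have hk' := (hk₁.differentiable one_ne_zero (x + h • e)).hasFDerivAt.comp_hasDerivAt h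
      (hline x h)
    exact (hk'.mul ((hasDerivAt_const h e).inner ℝ (hline x h))).congr_deriv (by simp [he])
  have hmin : ∀ h : ℝ, ∫ x in C, Ψ x ≤ ∫ x in C, Ψ (x + h • e) := fun h ↦
    setIntegral_le_setIntegral_add hC hCc hΨc
      (fun x ↦ by simpa [Ψ, radialPotential] using
        radialPotential_le_of_norm_le (x := 0) (y := x) hkc hk₀ e (by simp))
      (absConvex_sublevel_of_norm_mono fun _ _ ↦ radialPotential_le_of_norm_le hkc hk₀ e) _
  have hnonneg := deriv_deriv_nonneg_of_isLocalMin (x := 0)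
    (Eventually.of_forall fun h ↦ by simpa using hmin h) (hd₁ 0).continuousAt
  rw [funext fun h ↦ (hd₁ h).deriv, hd₂.deriv] at hnonneg
  simpa only [zero_smul, add_zero, mul_comm, add_comm] using hnonneg

end SecondVariation

section Stretch

variable {E : Type*} [NormedAddCommGroup E] [InnerProductSpace ℝ E] {e : E}

/-- The linear map that, for a unit vector `e`, multiplies by `s` in the direction `e` and fixes the
orthogonal complement of `e`. -/
noncomputable def stretch (e : E) (s : ℝ) : E →L[ℝ] E :=
  .id ℝ E + (s - 1) • InnerProductSpace.rankOne ℝ e e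

lemma stretch_apply (e : E) (s : ℝ) (x : E) :
    stretch e s x = x + ((s - 1) * inner ℝ e x) • e := by
  simp [stretch, mul_smul]

lemma stretch_one (e : E) : stretch e 1 = .id ℝ E := by
  simp [stretch]

lemma inner_stretch (he : ‖e‖ = 1) (s : ℝ) (x : E) :
    inner ℝ e (stretch e s x) = s * inner ℝ e x := by
  rw [stretch_apply, inner_add_right, inner_smul_right, inner_self_eq_one_of_norm_eq_one he]
  ring

lemma stretch_stretch (he : ‖e‖ = 1) (s t : ℝ) (x : E) :
    stretch e s (stretch e t x) = stretch e (s * t) x := by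
  rw [stretch_apply e s, inner_stretch he, stretch_apply, stretch_apply, add_assoc, ← add_smul]
  ring_nf

lemma norm_stretch_sq (he : ‖e‖ = 1) (s : ℝ) (x : E) :
    ‖stretch e s x‖ ^ 2 = ‖x‖ ^ 2 + (s ^ 2 - 1) * inner ℝ e x ^ 2 := by
  rw [stretch_apply, norm_add_sq_real, inner_smul_right, norm_smul, he, real_inner_comm,
    mul_one, Real.norm_eq_abs, sq_abs]
  ring

lemma lipschitzWith_stretch (he : ‖e‖ = 1) {s : ℝ} (hs₀ : 0 ≤ s) (hs₁ : s ≤ 1) :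
    LipschitzWith 1 (stretch e s) := by
  refine AddMonoidHomClass.lipschitz_of_bound_nnnorm _ 1 fun x ↦ ?_
  rw [one_mul, ← NNReal.coe_le_coe, coe_nnnorm, coe_nnnorm,
    ← sq_le_sq₀ (norm_nonneg _) (norm_nonneg _), norm_stretch_sq he]
  nlinarith [mul_nonneg (sub_nonneg.2 (pow_le_one₀ hs₀ hs₁ : s ^ 2 ≤ 1)) (sq_nonneg (inner ℝ e x))]

lemma leftInverse_stretch (he : ‖e‖ = 1) {s t : ℝ} (hst : s * t = 1) :
    Function.LeftInverse (stretch e s) (stretch e t) := fun x ↦ by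
  rw [stretch_stretch he, hst, stretch_one, ContinuousLinearMap.id_apply]

lemma det_stretch [FiniteDimensional ℝ E] (he : ‖e‖ = 1) (s : ℝ) : (stretch e s).det = s := by
  have : (stretch e s : E →ₗ[ℝ] E) = LinearMap.transvection ((s - 1) • innerₛₗ ℝ e) e := by
    ext x
    simp [stretch_apply, LinearMap.transvection.apply]
  rw [ContinuousLinearMap.det, this, LinearMap.transvection.det]
  simp [he]

variable {C : Set E}

lemma absConvex_image_stretch (he : ‖e‖ = 1) {s : ℝ} (hs : s ≠ 0) (hC : AbsConvex ℝ C) :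
    AbsConvex ℝ (stretch e s '' C) := by
  rw [image_eq_preimage_of_inverse (leftInverse_stretch he (inv_mul_cancel₀ hs))
    (leftInverse_stretch he (mul_inv_cancel₀ hs))]
  exact absConvex_preimage hC (stretch e s⁻¹ : E →ₗ[ℝ] E)

variable [FiniteDimensional ℝ E] [MeasurableSpace E] [BorelSpace E] {k : E → ℝ}

lemma setIntegral_image_stretch (he : ‖e‖ = 1) {s : ℝ} (hs : 0 < s) (hC : MeasurableSet C)
    (g : E → ℝ) : ∫ x in stretch e s '' C, g x = ∫ x in C, s * g (stretch e s x) := by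
  rw [integral_image_eq_integral_abs_det_fderiv_smul volume hC
    (fun x _ ↦ (stretch e s).hasFDerivAt.hasFDerivWithinAt)
    (leftInverse_stretch he (inv_mul_cancel₀ hs.ne')).injective.injOn]
  simp only [det_stretch he, abs_of_pos hs, smul_eq_mul]

lemma IsRadial.monotoneOn_setIntegral_image_stretch (hk : IsRadial k) (hk₁ : ContDiff ℝ 1 k)
    (hk₀ : ∀ x, 0 ≤ k x) (he : ‖e‖ = 1) (hC : AbsConvex ℝ C) (hCc : IsCompact C) :
    MonotoneOn (fun s ↦ ∫ x in stretch e s '' C, k x) (Ioi 0) := by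
  have hdk : Continuous fun x ↦ fderiv ℝ k x e :=
    (hk₁.continuous_fderiv one_ne_zero).clm_apply continuous_const
  have hS : Continuous fun p : ℝ × E ↦ stretch e p.1 p.2 := by
    simp only [stretch_apply]
    fun_prop
  have hderiv : ∀ s, HasDerivAt (fun s ↦ ∫ x in C, s * k (stretch e s x))
      (∫ x in C, (k (stretch e s x) + s * (inner ℝ e x * fderiv ℝ k (stretch e s x) e))) s := by
    refine hasDerivAt_setIntegral_of_isCompact hCc
      (F' := fun s x ↦ k (stretch e s x) + s * (inner ℝ e x * fderiv ℝ k (stretch e s x) e))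
      (continuous_fst.mul (hk₁.continuous.comp hS)) ((hk₁.continuous.comp hS).add
        (continuous_fst.mul (Continuous.mul (by fun_prop) (hdk.comp hS)))) fun s x ↦ ?_
    have hline : HasDerivAt (stretch e · x) (inner ℝ e x • e) s := by
      simp only [stretch_apply]
      simpa using
        ((((hasDerivAt_id s).sub_const 1).mul_const (inner ℝ e x)).smul_const e).const_add x
    exact ((hasDerivAt_id s).mul ((hk₁.differentiable one_ne_zero _).hasFDerivAt.comp_hasDerivAt s
      hline)).congr_deriv (by simp)
  refine MonotoneOn.congr (f₁ := fun s ↦ ∫ x in C, s * k (stretch e s x)) ?_ fun s hs ↦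
    (setIntegral_image_stretch he hs hCc.measurableSet k).symm
  refine monotoneOn_of_deriv_nonneg (convex_Ioi 0)
    (fun s _ ↦ (hderiv s).continuousAt.continuousWithinAt)
    (fun s _ ↦ (hderiv s).differentiableAt.differentiableWithinAt) fun s hs ↦ ?_
  rw [interior_Ioi, mem_Ioi] at hs
  have hnonneg := hk.setIntegral_add_inner_mul_fderiv_nonneg hk₁ hk₀ he
    (absConvex_image_stretch he hs.ne' hC) (hCc.image (stretch e s).continuous)
  rw [setIntegral_image_stretch he hs hCc.measurableSet, integral_const_mul] at hnonneg
  rw [(hderiv s).deriv]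
  simpa only [inner_stretch he, mul_assoc] using nonneg_of_mul_nonneg_right hnonneg hs

lemma IsRadial.withDensity_le_withDensity_preimage_stretch (hk : IsRadial k)
    (hk₁ : ContDiff ℝ 1 k) (hk₀ : ∀ x, 0 ≤ k x) (he : ‖e‖ = 1) {d : ℝ} (hd₀ : 0 < d) (hd₁ : d ≤ 1)
    (hC : AbsConvex ℝ C) (hCc : IsCompact C) :
    volume.withDensity (fun x ↦ ENNReal.ofReal (k x)) C
      ≤ volume.withDensity (fun x ↦ ENNReal.ofReal (k x)) (stretch e d ⁻¹' C) := by
  have hpre : stretch e d ⁻¹' C = stretch e d⁻¹ '' C :=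
    (congrFun (image_eq_preimage_of_inverse (leftInverse_stretch he (mul_inv_cancel₀ hd₀.ne'))
      (leftInverse_stretch he (inv_mul_cancel₀ hd₀.ne'))) C).symm
  have hint : ∀ {K : Set E}, IsCompact K →
      volume.withDensity (fun x ↦ ENNReal.ofReal (k x)) K = ENNReal.ofReal (∫ x in K, k x) :=
    fun hK ↦ by
      rw [withDensity_apply _ hK.measurableSet, ofReal_integral_eq_lintegral_ofReal
        (hk₁.continuous.continuousOn.integrableOn_compact hK) (ae_of_all _ hk₀)]
  rw [hpre, hint hCc, hint (hCc.image (stretch e d⁻¹).continuous)]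
  refine ENNReal.ofReal_le_ofReal ?_
  have := hk.monotoneOn_setIntegral_image_stretch hk₁ hk₀ he hC hCc (mem_Ioi.2 one_pos)
    (mem_Ioi.2 (inv_pos.2 hd₀)) (one_le_inv_iff₀.2 ⟨hd₀, hd₁⟩)
  simpa only [stretch_one, ContinuousLinearMap.coe_id', image_id] using this

end Stretch

section Convolution

lemma le_measure_limsup_atTop {α : Type*} [MeasurableSpace α] {μ : Measure α} [IsFiniteMeasure μ]
    {s : ℕ → Set α} (hs : ∀ n, MeasurableSet (s n)) {c : ℝ≥0∞} (hc : ∀ n, c ≤ μ (s n)) :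
    c ≤ μ (limsup s atTop) := by
  have hanti : Antitone fun n ↦ ⋃ m ≥ n, s m := fun a b hab ↦
    biUnion_mono (fun m (hm : b ≤ m) ↦ hab.trans hm) fun _ _ ↦ subset_rfl
  have hmeas : ∀ n, NullMeasurableSet (⋃ m ≥ n, s m) μ := fun n ↦
    (MeasurableSet.iUnion fun m ↦ .iUnion fun _ ↦ hs m).nullMeasurableSet
  rw [limsup_eq_iInf_iSup_of_nat]
  simp only [iInf_eq_iInter, iSup_eq_iUnion]
  rw [hanti.measure_iInter hmeas ⟨0, measure_ne_top _ _⟩]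
  exact le_iInf fun n ↦ (hc n).trans (measure_mono (subset_biUnion_of_mem (u := s) (le_refl n)))

variable {E : Type*} [NormedAddCommGroup E] [MeasurableSpace E] [BorelSpace E]
  [SecondCountableTopology E]

lemma conv_withDensity {μ ν : Measure E} [SFinite μ] [SFinite ν] [μ.IsAddLeftInvariant]
    {f : E → ℝ≥0∞} (hf : Measurable f) :
    ν ∗ μ.withDensity f = μ.withDensity fun x ↦ ∫⁻ z, f (x - z) ∂ν := by
  refine Measure.ext_of_lintegral _ fun g hg ↦ ?_
  have hshift : ∀ z, ∫⁻ y, g (z + y) ∂μ.withDensity f = ∫⁻ x, f (x - z) * g x ∂μ := fun z ↦ by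
    rw [lintegral_withDensity_eq_lintegral_mul μ hf (by fun_prop),
      ← lintegral_add_left_eq_self (fun x ↦ f (x - z) * g x) z]
    simp only [Pi.mul_apply, add_sub_cancel_left]
  have hmeas : Measurable fun x ↦ ∫⁻ z, f (x - z) ∂ν :=
    Measurable.lintegral_prod_right' (f := fun p : E × E ↦ f (p.1 - p.2)) (by fun_prop)
  rw [Measure.lintegral_conv hg, lintegral_congr hshift, lintegral_lintegral_swap (by fun_prop),
    lintegral_withDensity_eq_lintegral_mul μ hmeas hg]
  refine lintegral_congr fun x ↦ ?_
  rw [lintegral_mul_const _ (by fun_prop), Pi.mul_apply]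

variable {μ γ : Measure E} [SFinite γ] {δ : ℝ}

lemma measure_mul_le_conv_cthickening (hγ : γ (Metric.closedBall 0 δ)ᶜ = 0) (C : Set E) :
    μ C * γ univ ≤ (μ ∗ γ) (Metric.cthickening δ C) := by
  rw [Measure.conv, Measure.map_apply measurable_add Metric.isClosed_cthickening.measurableSet,
    ← measure_add_measure_compl (μ := γ) measurableSet_closedBall, hγ, add_zero,
    ← Measure.prod_prod]
  refine measure_mono fun p ⟨hx, hz⟩ ↦ Metric.mem_cthickening_of_dist_le _ p.1 δ C hx ?_
  simpa using hz

lemma conv_preimage_le_measure_preimage_cthickening_mul (hγ : γ (Metric.closedBall 0 δ)ᶜ = 0)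
    {L : E → E} (hL : LipschitzWith 1 L) {C : Set E} (hC : MeasurableSet C) :
    (μ ∗ γ) (L ⁻¹' C) ≤ μ (L ⁻¹' Metric.cthickening δ C) * γ univ := by
  rw [Measure.conv, Measure.map_apply measurable_add (hL.continuous.measurable hC),
    ← Measure.prod_prod]
  have hnull : μ.prod γ (univ ×ˢ (Metric.closedBall 0 δ)ᶜ) = 0 := by
    rw [Measure.prod_prod, hγ, mul_zero]
  refine (measure_mono (t := _ ×ˢ univ ∪ univ ×ˢ (Metric.closedBall 0 δ)ᶜ) fun p hp ↦ ?_).trans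
    ((measure_union_le _ _).trans (by rw [hnull, add_zero]))
  by_cases hz : p.2 ∈ Metric.closedBall 0 δ
  · refine .inl ⟨Metric.mem_cthickening_of_dist_le _ (L (p.1 + p.2)) δ C hp ?_, trivial⟩
    exact (hL.dist_le_mul _ _).trans (by simpa using hz)
  · exact .inr ⟨trivial, hz⟩

end Convolution

section MorePeaked

variable {E F : Type*} [NormedAddCommGroup E] [NormedSpace ℝ E] [MeasurableSpace E]
  [NormedAddCommGroup F] [NormedSpace ℝ F] [MeasurableSpace F]

/-- The peakedness order (Sherman): `MorePeaked μ ν` says that `μ` charges every closed absolutely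
convex set at least as much as `ν` does. It is used to compare finite measures of equal mass. -/
def MorePeaked (μ ν : Measure E) : Prop := ∀ ⦃C⦄, IsClosed C → AbsConvex ℝ C → ν C ≤ μ C

variable {μ ν ρ : Measure E}

lemma MorePeaked.refl (μ : Measure E) : MorePeaked μ μ := fun _ _ _ ↦ le_rfl

lemma MorePeaked.trans (h₁ : MorePeaked μ ν) (h₂ : MorePeaked ν ρ) : MorePeaked μ ρ :=
  fun _ hC hC' ↦ (h₂ hC hC').trans (h₁ hC hC')

lemma morePeaked_of_forall_isCompact [ProperSpace E]
    (h : ∀ C, IsCompact C → AbsConvex ℝ C → ν C ≤ μ C) : MorePeaked μ ν := fun C hC hC' ↦ by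
  have hball : ⋃ n : ℕ, C ∩ Metric.closedBall 0 n = C := by
    rw [← inter_iUnion, Metric.iUnion_closedBall_nat, inter_univ]
  have hmono : Monotone fun n : ℕ ↦ C ∩ Metric.closedBall 0 n := fun m n hmn ↦
    inter_subset_inter_right _ (Metric.closedBall_subset_closedBall (Nat.cast_le.2 hmn))
  rw [← hball, hmono.measure_iUnion]
  exact iSup_le fun n ↦ (h _ ((isCompact_closedBall _ _).inter_left hC)
    (hC'.inter ⟨balanced_closedBall_zero, convex_closedBall _ _⟩)).trans
      (measure_mono (subset_iUnion (fun n : ℕ ↦ C ∩ Metric.closedBall 0 n) n))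

variable [BorelSpace E] [BorelSpace F]

lemma MorePeaked.map (h : MorePeaked μ ν) (L : E →L[ℝ] F) :
    MorePeaked (μ.map L) (ν.map L) := fun C hC hC' ↦ by
  rw [Measure.map_apply L.measurable hC.measurableSet, Measure.map_apply L.measurable
    hC.measurableSet]
  exact h (hC.preimage L.continuous) (absConvex_preimage hC' L.toLinearMap)

lemma MorePeaked.measure_lt_le [IsProbabilityMeasure μ] [IsProbabilityMeasure ν]
    (h : MorePeaked μ ν) {g : E → ℝ} (hg : Continuous g)
    (hg' : ∀ t, AbsConvex ℝ {x | g x ≤ t}) (t : ℝ) : μ {x | t < g x} ≤ ν {x | t < g x} := by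
  have hclosed : IsClosed {x | g x ≤ t} := isClosed_le hg continuous_const
  have hcompl : {x | t < g x} = {x | g x ≤ t}ᶜ := by ext; simp
  rw [hcompl, prob_compl_eq_one_sub hclosed.measurableSet,
    prob_compl_eq_one_sub hclosed.measurableSet]
  exact tsub_le_tsub_left (h hclosed (hg' t)) 1

end MorePeaked

section Bump

lemma absConvex_cthickening {E : Type*} [SeminormedAddCommGroup E] [NormedSpace ℝ E] {s : Set E}
    (hs : AbsConvex ℝ s) (δ : ℝ) : AbsConvex ℝ (Metric.cthickening δ s) := by
  refine absConvex_iff_convex_and_neg_mem.2 ⟨hs.2.cthickening δ, fun x hx ↦ ?_⟩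
  rwa [← Set.mem_neg, neg_cthickening, hs.1.neg_eq]

lemma exists_isRadial_contDiff_eq_zero_of_le_norm (E : Type*) [NormedAddCommGroup E]
    [InnerProductSpace ℝ E] {δ : ℝ} (hδ : 0 < δ) :
    ∃ ρ : E → ℝ, IsRadial ρ ∧ ContDiff ℝ 1 ρ ∧ (∀ x, 0 ≤ ρ x) ∧ 0 < ρ 0 ∧
      ∀ x, δ ≤ ‖x‖ → ρ x = 0 := by
  refine ⟨fun x ↦ Real.smoothTransition (1 - ‖x‖ ^ 2 / δ ^ 2), fun x y h ↦ by simp only [h],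
    Real.smoothTransition.contDiff.comp (contDiff_const.sub ((contDiff_norm_sq ℝ).div_const _)),
    fun x ↦ Real.smoothTransition.nonneg _, Real.smoothTransition.pos_of_pos (by simp),
    fun x hx ↦ Real.smoothTransition.zero_of_nonpos (sub_nonpos.2 ?_)⟩
  rw [one_le_div (by positivity)]
  gcongr

end Bump

section Spherical

variable {E : Type*} [NormedAddCommGroup E] [InnerProductSpace ℝ E] [MeasurableSpace E]
  {ν : Measure E}

/-- A measure on an inner product space is spherical if it is invariant under the orthogonal
group. -/
def IsSpherical (ν : Measure E) : Prop := ∀ U : E ≃ₗᵢ[ℝ] E, ν.map U = ν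

variable [BorelSpace E]

lemma IsSpherical.isRadial_integral_sub (hν : IsSpherical ν) {ρ : E → ℝ} (hρ : IsRadial ρ) :
    IsRadial fun x ↦ ∫ z, ρ (x - z) ∂ν := fun x y hxy ↦ by
  set U : E ≃ₗᵢ[ℝ] E := (ℝ ∙ (x - y))ᗮ.reflection
  have hU : U x = y := Submodule.reflection_sub hxy
  calc ∫ z, ρ (x - z) ∂ν = ∫ z, ρ (y - U z) ∂ν :=
        integral_congr_ae (ae_of_all _ fun z ↦ hρ _ _ (by rw [← hU, ← map_sub, U.norm_map]))
    _ = ∫ z, ρ (y - z) ∂ν.map U :=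
        (U.toHomeomorph.measurableEmbedding.integral_map (fun z ↦ ρ (y - z))).symm
    _ = ∫ z, ρ (y - z) ∂ν := by rw [hν U]

variable [FiniteDimensional ℝ E] [IsFiniteMeasure ν] {e : E} {C : Set E}

lemma IsSpherical.conv_withDensity_le (hν : IsSpherical ν) {ρ : E → ℝ} (hρ : IsRadial ρ)
    (hρ₀ : ∀ x, 0 ≤ ρ x) (hρ₁ : ContDiff ℝ 1 ρ) (hρs : HasCompactSupport ρ) (he : ‖e‖ = 1) {d : ℝ}
    (hd₀ : 0 < d) (hd₁ : d ≤ 1) (hC : AbsConvex ℝ C) (hCc : IsCompact C) :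
    (ν ∗ volume.withDensity fun x ↦ ENNReal.ofReal (ρ x)) C
      ≤ (ν ∗ volume.withDensity fun x ↦ ENNReal.ofReal (ρ x)) (stretch e d ⁻¹' C) := by
  have hsmooth : ContDiff ℝ 1 fun x ↦ ∫ z, ρ (x - z) ∂ν := by
    have hconv : (fun x ↦ ∫ z, ρ (x - z) ∂ν) = convolution (fun _ ↦ 1) ρ (.mul ℝ ℝ) ν := by
      ext x
      simp only [convolution_mul, one_mul]
    exact hconv ▸ hρs.contDiff_convolution_right (n := 1) _ (locallyIntegrable_const 1) hρ₁
  have hint : ∀ x, Integrable (fun z ↦ ρ (x - z)) ν := fun x ↦ by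
    obtain ⟨M, hM⟩ := hρs.exists_bound_of_continuous hρ₁.continuous
    exact .of_bound (Continuous.aestronglyMeasurable (by fun_prop)) M (ae_of_all _ fun z ↦ hM _)
  have hdens : (ν ∗ volume.withDensity fun x ↦ ENNReal.ofReal (ρ x))
      = volume.withDensity fun x ↦ ENNReal.ofReal (∫ z, ρ (x - z) ∂ν) := by
    rw [conv_withDensity hρ₁.continuous.measurable.ennreal_ofReal]
    simp only [ofReal_integral_eq_lintegral_ofReal (hint _) (ae_of_all _ fun _ ↦ hρ₀ _)]
  rw [hdens]
  exact (hν.isRadial_integral_sub hρ).withDensity_le_withDensity_preimage_stretch hsmooth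
    (fun x ↦ integral_nonneg fun z ↦ hρ₀ _) he hd₀ hd₁ hC hCc

lemma IsSpherical.measure_le_preimage_stretch_cthickening (hν : IsSpherical ν) (he : ‖e‖ = 1)
    {d : ℝ} (hd₀ : 0 < d) (hd₁ : d ≤ 1) {δ : ℝ} (hδ : 0 < δ) (hC : AbsConvex ℝ C)
    (hCc : IsCompact C) :
    ν C ≤ ν (stretch e d ⁻¹' Metric.cthickening (δ + δ) C) := by
  obtain ⟨ρ, hρ, hρ₁, hρ₀, hρ_pos, hρ_zero⟩ := exists_isRadial_contDiff_eq_zero_of_le_norm E hδ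
  have hρs : HasCompactSupport ρ := .intro (isCompact_closedBall 0 δ) fun x hx ↦
    hρ_zero x (by simpa using (not_le.1 (mt mem_closedBall_zero_iff.2 hx)).le)
  have hint : Integrable ρ := hρ₁.continuous.integrable_of_hasCompactSupport hρs
  set γ : Measure E := volume.withDensity fun x ↦ ENNReal.ofReal (ρ x)
  have hγ_univ : γ univ = ENNReal.ofReal (∫ x, ρ x) := by
    rw [withDensity_apply _ .univ, setLIntegral_univ,
      ofReal_integral_eq_lintegral_ofReal hint (ae_of_all _ hρ₀)]
  have hγ₀ : γ univ ≠ 0 := by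
    rw [hγ_univ, ENNReal.ofReal_ne_zero_iff]
    exact hρ₁.continuous.integral_pos_of_hasCompactSupport_nonneg_nonzero hρs hρ₀ hρ_pos.ne'
  have hγ_ball : γ (Metric.closedBall 0 δ)ᶜ = 0 := by
    rw [withDensity_apply _ measurableSet_closedBall.compl]
    refine setLIntegral_eq_zero measurableSet_closedBall.compl fun x hx ↦ ?_
    simp [hρ_zero x (by simpa using (not_le.1 (mt mem_closedBall_zero_iff.2 hx)).le)]
  refine (ENNReal.mul_le_mul_iff_left hγ₀ (hγ_univ ▸ ENNReal.ofReal_ne_top)).1 ?_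
  calc ν C * γ univ ≤ (ν ∗ γ) (Metric.cthickening δ C) :=
        measure_mul_le_conv_cthickening hγ_ball C
    _ ≤ (ν ∗ γ) (stretch e d ⁻¹' Metric.cthickening δ C) :=
        hν.conv_withDensity_le hρ hρ₀ hρ₁ hρs he hd₀ hd₁ (absConvex_cthickening hC δ)
          hCc.cthickening
    _ ≤ ν (stretch e d ⁻¹' Metric.cthickening δ (Metric.cthickening δ C)) * γ univ :=
        conv_preimage_le_measure_preimage_cthickening_mul hγ_ball
          (lipschitzWith_stretch he hd₀.le hd₁) Metric.isClosed_cthickening.measurableSet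
    _ ≤ ν (stretch e d ⁻¹' Metric.cthickening (δ + δ) C) * γ univ := by
        gcongr
        exact Metric.cthickening_cthickening_subset hδ.le hδ.le C

lemma IsSpherical.morePeaked_map_stretch (hν : IsSpherical ν) (he : ‖e‖ = 1) {d : ℝ} (hd₀ : 0 ≤ d)
    (hd₁ : d ≤ 1) : MorePeaked (ν.map (stretch e d)) ν := by
  refine morePeaked_of_forall_isCompact fun C hCc hC ↦ ?_
  rw [Measure.map_apply (stretch e d).measurable hCc.measurableSet]
  obtain ⟨δ, -, hδ, hδ₀⟩ := exists_seq_strictAnti_tendsto' (zero_lt_one' ℝ)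
  have hdm : Tendsto (fun n ↦ max d (δ n)) atTop (𝓝 d) := by
    simpa [max_eq_left hd₀] using (tendsto_const_nhds (x := d)).max hδ₀
  refine (le_measure_limsup_atTop (fun n ↦ ?_) fun n ↦
    hν.measure_le_preimage_stretch_cthickening he (lt_max_of_lt_right (hδ n).1)
      (max_le hd₁ (hδ n).2.le) (hδ n).1 hC hCc).trans (measure_mono fun z hz ↦ ?_)
  · exact (stretch e _).measurable Metric.isClosed_cthickening.measurableSet
  · rw [mem_limsup_iff_frequently_mem] at hz
    have hlim : Tendsto (fun n ↦ stretch e (max d (δ n)) z) atTop (𝓝 (stretch e d z)) := by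
      simp only [stretch_apply]
      exact ((((hdm.sub_const 1).mul_const _).smul_const e).const_add z)
    have hδδ : Tendsto (fun n ↦ ENNReal.ofReal (δ n + δ n)) atTop (𝓝 0) := by
      simpa using ENNReal.tendsto_ofReal (hδ₀.add hδ₀)
    rw [mem_preimage, ← hCc.isClosed.closure_eq, Metric.mem_closure_iff_infEDist_zero,
      ← nonpos_iff_eq_zero]
    exact le_of_tendsto_of_tendsto_of_frequently
      ((Metric.continuous_infEDist.tendsto _).comp hlim) hδδ hz

lemma IsSpherical.morePeaked_map_of_apply_eq_smul (hν : IsSpherical ν) {ι : Type*} [Fintype ι]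
    (b : OrthonormalBasis ι ℝ E) {d : ι → ℝ} (hd₀ : ∀ i, 0 ≤ d i) (hd₁ : ∀ i, d i ≤ 1)
    {D : E →L[ℝ] E} (hD : ∀ i, D (b i) = d i • b i) : MorePeaked (ν.map D) ν := by
  classical
  -- `D` is the composition of the commuting stretches by `d i` along `b i`
  let D' : Finset ι → E →L[ℝ] E := fun s ↦
    .id ℝ E + ∑ i ∈ s, (d i - 1) • InnerProductSpace.rankOne ℝ (b i) (b i)
  have hD'_apply : ∀ s x, D' s x = x + ∑ i ∈ s, ((d i - 1) * inner ℝ (b i) x) • b i :=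
    fun s x ↦ by simp [D', mul_smul]
  have hD' : ∀ i s, i ∉ s → D' (insert i s) = (stretch (b i) (d i)).comp (D' s) := fun i s hi ↦ by
    have horth : ∀ x, inner ℝ (b i) (D' s x) = inner ℝ (b i) x := fun x ↦ by
      have h : ∑ j ∈ s, (d j - 1) * (inner ℝ (b j) x * inner ℝ (b i) (b j)) = 0 :=
        Finset.sum_eq_zero fun j hj ↦ by
          rw [b.inner_eq_zero (ne_of_mem_of_not_mem hj hi).symm, mul_zero, mul_zero]
      simpa only [hD'_apply, inner_add_right, inner_sum, inner_smul_right, mul_assoc, add_eq_left]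
        using h
    ext x
    rw [ContinuousLinearMap.comp_apply, stretch_apply, horth, hD'_apply, hD'_apply,
      Finset.sum_insert hi]
    abel
  have hall : ∀ s, MorePeaked (ν.map (D' s)) ν := fun s ↦ by
    induction s using Finset.induction_on with
    | empty => simpa [D'] using MorePeaked.refl ν
    | insert i s hi ih =>
      rw [hD' i s hi, ContinuousLinearMap.coe_comp, ← Measure.map_map
        (stretch _ _).measurable (D' s).measurable]
      exact (ih.map _).trans (hν.morePeaked_map_stretch (b.norm_eq_one i) (hd₀ i) (hd₁ i))
  have hD_eq : D = D' Finset.univ := by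
    refine ContinuousLinearMap.coe_injective (b.toBasis.ext fun i ↦ ?_)
    simp [hD'_apply, hD, b.inner_eq_ite, sub_smul]
  exact hD_eq ▸ hall Finset.univ

end Spherical

section Elliptical

variable {E : Type*} [NormedAddCommGroup E] [InnerProductSpace ℝ E] {A B : E →L[ℝ] E}

lemma norm_sq_eq_inner_of_comp_self_eq {S : E →L[ℝ] E} (hS : S.IsPositive) (hSA : S ∘L S = A)
    (x : E) : ‖S x‖ ^ 2 = inner ℝ x (A x) := by
  rw [← hSA, ← real_inner_self_eq_norm_sq, hS.inner_left_eq_inner_right]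
  rfl

variable [FiniteDimensional ℝ E]

lemma exists_isPositive_comp_self_eq (hA : A.IsPositive) :
    ∃ S : E →L[ℝ] E, S.IsPositive ∧ S ∘L S = A := by
  set b := hA.isSymmetric.eigenvectorBasis rfl
  set l := hA.isSymmetric.eigenvalues rfl
  have hl : ∀ i, 0 ≤ l i := hA.toLinearMap.nonneg_eigenvalues rfl
  refine ⟨∑ i, √(l i) • InnerProductSpace.rankOne ℝ (b i) (b i),
    ContinuousLinearMap.isPositive_sum _ fun i _ ↦
      (InnerProductSpace.isPositive_rankOne_self (b i)).smul_of_nonneg (Real.sqrt_nonneg _),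
    ContinuousLinearMap.coe_injective (b.toBasis.ext fun i ↦ ?_)⟩
  have hA_apply : A (b i) = l i • b i := hA.isSymmetric.apply_eigenvectorBasis rfl i
  simp [hA_apply, b.inner_eq_ite, smul_smul, hl]

lemma apply_eq_zero_of_isPositive_of_le (hA : A.IsPositive) (hAB : A ≤ B) {x : E} (hx : B x = 0) :
    A x = 0 := by
  obtain ⟨S, hS, hSA⟩ := exists_isPositive_comp_self_eq hA
  have hSx : ‖S x‖ ^ 2 ≤ 0 := by
    rw [norm_sq_eq_inner_of_comp_self_eq hS hSA]
    simpa [inner_sub_right, hx] using hAB.inner_nonneg_right x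
  have hSx₀ : S x = 0 := norm_eq_zero.1 (pow_eq_zero_iff two_ne_zero |>.1
    (hSx.antisymm (sq_nonneg _)))
  rw [← hSA, ContinuousLinearMap.comp_apply, hSx₀, map_zero]

variable [MeasurableSpace E] [BorelSpace E]

/-- `IsElliptical φ A μ` says that `μ` is the elliptical law with location `0`, dispersion
operator `A` and characteristic generator `φ`. -/
def IsElliptical (φ : ℝ → ℂ) (A : E →L[ℝ] E) (μ : Measure E) : Prop :=
  ∀ t, charFun μ t = φ (inner ℝ t (A t))

variable {φ : ℝ → ℂ} {μ ν : Measure E}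

lemma charFun_map_clm {F : Type*} [NormedAddCommGroup F] [InnerProductSpace ℝ F]
    [FiniteDimensional ℝ F] [MeasurableSpace F] [BorelSpace F] (μ : Measure E) (L : E →L[ℝ] F)
    (t : F) : charFun (μ.map L) t = charFun μ (L.adjoint t) := by
  rw [charFun_apply, charFun_apply, integral_map L.measurable.aemeasurable (by fun_prop)]
  simp only [ContinuousLinearMap.adjoint_inner_right]

lemma IsElliptical.map {F : Type*} [NormedAddCommGroup F] [InnerProductSpace ℝ F]
    [FiniteDimensional ℝ F] [MeasurableSpace F] [BorelSpace F] (hμ : IsElliptical φ A μ)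
    (L : E →L[ℝ] F) : IsElliptical φ (L ∘L A ∘L L.adjoint) (μ.map L) := fun t ↦ by
  rw [charFun_map_clm, hμ]
  simp [← ContinuousLinearMap.adjoint_inner_left]

variable [IsFiniteMeasure μ] [IsFiniteMeasure ν]

lemma IsElliptical.eq_of_inner_eq (hμ : IsElliptical φ A μ) (hν : IsElliptical φ B ν)
    (hAB : ∀ t, inner ℝ t (A t) = inner ℝ t (B t)) : μ = ν :=
  Measure.ext_of_charFun (funext fun t ↦ by rw [hμ, hν, hAB])

lemma IsElliptical.map_adjoint_eq_self (hμ : IsElliptical φ A μ) (hA : A.IsPositive)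
    {P : E →L[ℝ] E} (hP : ∀ x, A (P x) = A x) : μ.map P.adjoint = μ :=
  (hμ.map P.adjoint).eq_of_inner_eq hμ fun t ↦ by
    simp only [ContinuousLinearMap.adjoint_adjoint, ContinuousLinearMap.comp_apply, hP,
      ContinuousLinearMap.adjoint_inner_right]
    rw [← hA.inner_left_eq_inner_right, hP, hA.inner_left_eq_inner_right]

lemma IsElliptical.isSpherical (hμ : IsElliptical φ (.id ℝ E) μ) : IsSpherical μ := fun U ↦
  (hμ.map (U : E →L[ℝ] E)).eq_of_inner_eq hμ fun t ↦ by
    simp [LinearIsometryEquiv.adjoint_eq_symm]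

lemma IsSpherical.morePeaked_map_of_isPositive (hν : IsSpherical ν) {D : E →L[ℝ] E}
    (hD : D.IsPositive) (hD₁ : ∀ x, ‖D x‖ ≤ ‖x‖) : MorePeaked (ν.map D) ν := by
  set b := hD.isSymmetric.eigenvectorBasis rfl
  have hDb : ∀ i, D (b i) = hD.isSymmetric.eigenvalues rfl i • b i :=
    hD.isSymmetric.apply_eigenvectorBasis rfl
  have hd₀ := hD.toLinearMap.nonneg_eigenvalues rfl
  refine hν.morePeaked_map_of_apply_eq_smul b hd₀ (fun i ↦ ?_) hDb
  simpa [hDb, norm_smul, abs_of_nonneg (hd₀ i)] using hD₁ (b i)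

lemma IsElliptical.morePeaked_of_le_id (hμ : IsElliptical φ A μ) (hA : A.IsPositive)
    (hA₁ : A ≤ .id ℝ E) (hν : IsElliptical φ (.id ℝ E) ν) : MorePeaked μ ν := by
  obtain ⟨D, hD, hDA⟩ := exists_isPositive_comp_self_eq hA
  have hD₁ : ∀ x, ‖D x‖ ≤ ‖x‖ := fun x ↦ by
    rw [← sq_le_sq₀ (norm_nonneg _) (norm_nonneg _), norm_sq_eq_inner_of_comp_self_eq hD hDA,
      ← real_inner_self_eq_norm_sq]
    simpa [inner_sub_right] using hA₁.inner_nonneg_right x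
  have hμν : μ = ν.map D := hμ.eq_of_inner_eq (hν.map D) fun t ↦ by
    simp [← hDA, hD.isSelfAdjoint.adjoint_eq]
  exact hμν ▸ hν.isSpherical.morePeaked_map_of_isPositive hD hD₁

theorem IsElliptical.morePeaked_of_le (hμ : IsElliptical φ A μ) (hA : A.IsPositive)
    (hν : IsElliptical φ B ν) (hAB : A ≤ B) : MorePeaked μ ν := by
  have hB : B.IsPositive := by simpa using hAB.add hA
  -- in coordinates `R` on the range of `S = √B`, the dispersion of `ν` becomes the identity
  obtain ⟨S, hS, hSB⟩ := exists_isPositive_comp_self_eq hB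
  obtain ⟨R, hR⟩ := S.rangeRestrict.exists_rightInverse_of_surjective (by simp)
  have hSR : ∀ t, S (R t) = t := fun t ↦ congrArg Subtype.val (DFunLike.congr_fun hR t)
  have hμR := hμ.map R.adjoint
  have hνR := hν.map R.adjoint
  rw [R.adjoint_adjoint] at hμR hνR
  have hBR : R.adjoint ∘L B ∘L R = .id ℝ S.range := by
    ext1 t
    refine ext_inner_right ℝ fun u ↦ ?_
    rw [ContinuousLinearMap.comp_apply, ContinuousLinearMap.adjoint_inner_left, ← hSB]
    simp [hS.inner_left_eq_inner_right, hSR]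
  rw [hBR] at hνR
  have hAR : R.adjoint ∘L A ∘L R ≤ .id ℝ S.range := by
    rw [← hBR, ContinuousLinearMap.le_def]
    simpa [ContinuousLinearMap.comp_sub, ContinuousLinearMap.sub_comp] using hAB.adjoint_conj R
  have key := (hμR.morePeaked_of_le_id (hA.adjoint_conj R) hAR hνR).map S.rangeRestrict.adjoint
  set P : E →L[ℝ] E := R ∘L S.rangeRestrict
  have hSP : ∀ x, S (P x) = S x := fun x ↦ hSR _
  have hBP : ∀ x, B (P x) = B x := fun x ↦ by simp [← hSB, hSP]
  have hAP : ∀ x, A (P x) = A x := fun x ↦ by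
    rw [← sub_eq_zero, ← map_sub]
    exact apply_eq_zero_of_isPositive_of_le hA hAB (by rw [map_sub, hBP, sub_self])
  rwa [Measure.map_map (by fun_prop) (by fun_prop), Measure.map_map (by fun_prop) (by fun_prop),
    ← ContinuousLinearMap.coe_comp, ← ContinuousLinearMap.adjoint_comp,
    hμ.map_adjoint_eq_self hA hAP, hν.map_adjoint_eq_self hB hBP] at key

end Elliptical

section RandomVector

variable {Ω : Type*} [MeasurableSpace Ω] {P : Measure Ω} {m n : ℕ} {X : Ω → Fin n → ℝ}

lemma measurable_toLp_mulVec_sub (hX : Measurable X) (A : Matrix (Fin m) (Fin n) ℝ)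
    (μ : Fin n → ℝ) : Measurable fun ω ↦ WithLp.toLp 2 (A *ᵥ X ω - A *ᵥ μ) :=
  have hA : Continuous fun x : Fin n → ℝ ↦ WithLp.toLp 2 (A *ᵥ x - A *ᵥ μ) := by fun_prop
  hA.measurable.comp hX

lemma charFun_map_toLp_mulVec_sub (hX : Measurable X) (A : Matrix (Fin m) (Fin n) ℝ)
    (μ : Fin n → ℝ) (t : EuclideanSpace ℝ (Fin m)) :
    charFun (P.map fun ω ↦ WithLp.toLp 2 (A *ᵥ X ω - A *ᵥ μ)) t
      = Complex.exp (-(((∑ i, (t ᵥ* A) i * μ i : ℝ) : ℂ) * Complex.I)) * charFn P X (t ᵥ* A) := by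
  have hinner : ∀ x : Fin n → ℝ, inner ℝ (WithLp.toLp 2 (A *ᵥ x - A *ᵥ μ)) t
      = (t ᵥ* A) ⬝ᵥ x - (t ᵥ* A) ⬝ᵥ μ := fun x ↦ by
    simp [EuclideanSpace.inner_eq_star_dotProduct, dotProduct_sub, dotProduct_mulVec]
  rw [charFun_apply, integral_map (measurable_toLp_mulVec_sub hX A μ).aemeasurable (by fun_prop),
    charFn, ← integral_const_mul]
  refine integral_congr_ae (ae_of_all _ fun ω ↦ ?_)
  simp only [hinner, ← Complex.exp_add, dotProduct]
  push_cast
  ring_nf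

lemma isElliptical_map_toLp_mulVec_sub (hX : Measurable X) {μ : Fin n → ℝ}
    {S : Matrix (Fin n) (Fin n) ℝ} {φ : ℝ → ℂ}
    (hXell : ∀ t : Fin n → ℝ,
      charFn P X t = Complex.exp (((∑ i, t i * μ i : ℝ) : ℂ) * Complex.I) * φ (t ⬝ᵥ S *ᵥ t))
    (A : Matrix (Fin m) (Fin n) ℝ) :
    IsElliptical φ (toEuclideanCLM (𝕜 := ℝ) (A * S * Aᵀ))
      (P.map fun ω ↦ WithLp.toLp 2 (A *ᵥ X ω - A *ᵥ μ)) := fun t ↦ by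
  rw [charFun_map_toLp_mulVec_sub hX, hXell, ← mul_assoc, ← Complex.exp_add, neg_add_cancel,
    Complex.exp_zero, one_mul, inner_toEuclideanCLM, ← mulVec_mulVec, ← mulVec_mulVec,
    mulVec_transpose, dotProduct_mulVec t A]

end RandomVector

section Gini

variable {n : ℕ}

lemma continuous_gini : Continuous (gini (n := n)) := by
  unfold gini
  fun_prop

lemma gini_smul (a : ℝ) (x : Fin n → ℝ) : gini (a • x) = ‖a‖ * gini x := by
  simp only [gini, Pi.smul_apply, smul_eq_mul, ← mul_sub, abs_mul, ← Finset.mul_sum,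
    Real.norm_eq_abs]
  ring

lemma gini_add_le (x y : Fin n → ℝ) : gini (x + y) ≤ gini x + gini y := by
  simp only [gini, ← mul_add, ← Finset.sum_add_distrib, Pi.add_apply, add_sub_add_comm]
  gcongr
  exact abs_add_le _ _

lemma absConvex_gini_le (t : ℝ) : AbsConvex ℝ {x : Fin n → ℝ | gini x ≤ t} := by
  set p : Seminorm ℝ (Fin n → ℝ) := .of gini gini_add_le gini_smul
  have hp : {x | gini x ≤ t} = p.closedBall 0 t := by
    rw [Seminorm.closedBall_zero_eq]
    rfl
  exact hp ▸ ⟨p.balanced_closedBall_zero t, p.convex_closedBall 0 t⟩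

lemma centeringMatrix_mulVec (x : Fin n → ℝ) (i : Fin n) :
    (centeringMatrix n *ᵥ x) i = x i - (n : ℝ)⁻¹ * ∑ j, x j := by
  rw [centeringMatrix, sub_mulVec, one_mulVec, smul_mulVec]
  simp [mulVec, dotProduct]

lemma gini_centeringMatrix_mulVec_sub_const (x : Fin n → ℝ) (c : ℝ) :
    gini (centeringMatrix n *ᵥ x - centeringMatrix n *ᵥ fun _ ↦ c) = gini x := by
  simp only [gini, Pi.sub_apply, centeringMatrix_mulVec, sub_sub_sub_cancel_right]

end Gini

theorem gini_st_order_elliptical_centering_general {Ω Ω' : Type*} [MeasurableSpace Ω]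
    [MeasurableSpace Ω'] (P : Measure Ω) [IsProbabilityMeasure P] (P' : Measure Ω')
    [IsProbabilityMeasure P'] {m n : ℕ} (X : Ω → Fin n → ℝ) (Y : Ω' → Fin n → ℝ)
    (hX : Measurable X) (hY : Measurable Y) (μ : Fin n → ℝ) (Sx Sy : Matrix (Fin n) (Fin n) ℝ)
    (hSx : Sx.PosSemidef) (φ : ℝ → ℂ)
    (hXell : ∀ t : Fin n → ℝ,
      charFn P X t = Complex.exp (((∑ i, t i * μ i : ℝ) : ℂ) * Complex.I) * φ (t ⬝ᵥ Sx *ᵥ t))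
    (hYell : ∀ t : Fin n → ℝ,
      charFn P' Y t = Complex.exp (((∑ i, t i * μ i : ℝ) : ℂ) * Complex.I) * φ (t ⬝ᵥ Sy *ᵥ t))
    (A : Matrix (Fin m) (Fin n) ℝ) (hle : (A * Sy * Aᵀ - A * Sx * Aᵀ).PosSemidef)
    {g : (Fin m → ℝ) → ℝ} (hg : Continuous g) (hg' : ∀ t, AbsConvex ℝ {x | g x ≤ t}) (t : ℝ) :
    P {ω | t < g (A *ᵥ X ω - A *ᵥ μ)} ≤ P' {ω | t < g (A *ᵥ Y ω - A *ᵥ μ)} := by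
  have hmX := measurable_toLp_mulVec_sub hX A μ
  have hmY := measurable_toLp_mulVec_sub hY A μ
  have := Measure.isProbabilityMeasure_map (μ := P) hmX.aemeasurable
  have := Measure.isProbabilityMeasure_map (μ := P') hmY.aemeasurable
  have hpos : (toEuclideanCLM (𝕜 := ℝ) (A * Sx * Aᵀ)).IsPositive :=
    isPositive_toEuclideanLin_iff.2 (hSx.mul_mul_conjTranspose_same A)
  have hle' : toEuclideanCLM (𝕜 := ℝ) (A * Sx * Aᵀ) ≤ toEuclideanCLM (𝕜 := ℝ) (A * Sy * Aᵀ) := by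
    rw [ContinuousLinearMap.le_def, ← map_sub]
    exact isPositive_toEuclideanLin_iff.2 hle
  have hpeak := (isElliptical_map_toLp_mulVec_sub hX hXell A).morePeaked_of_le hpos
    (isElliptical_map_toLp_mulVec_sub hY hYell A) hle'
  have hgE : Continuous fun x : EuclideanSpace ℝ (Fin m) ↦ g x.ofLp :=
    hg.comp (PiLp.continuous_ofLp 2 _)
  have hmeas : MeasurableSet {x : EuclideanSpace ℝ (Fin m) | t < g x.ofLp} :=
    (isOpen_lt continuous_const hgE).measurableSet
  have := hpeak.measure_lt_le hgE
    (fun t ↦ absConvex_preimage (hg' t) (WithLp.linearEquiv 2 ℝ (Fin m → ℝ)).toLinearMap) t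
  rwa [Measure.map_apply hmX hmeas, Measure.map_apply hmY hmeas] at this

/-- If `X ∼ ELLₙ(μ, Σx, φ)`, `Y ∼ ELLₙ(μ, Σy, φ)` and
`A Σx Aᵀ ⪯ A Σy Aᵀ` for the centering matrix `A`, then
`G_n(AX − Aμ) ≤_st G_n(AY − Aμ)`; in particular, if `μ = c·1ₙ` then
`G_n(X) ≤_st G_n(Y)`. -/
theorem gini_st_order_elliptical_centering {Ω : Type*} [MeasurableSpace Ω]
    (P : Measure Ω) [IsProbabilityMeasure P] {n : ℕ}
    (X Y : Ω → Fin n → ℝ) (hX : Measurable X) (hY : Measurable Y)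
    (μ : Fin n → ℝ) (Sx Sy : Matrix (Fin n) (Fin n) ℝ)
    (hSx : Sx.PosSemidef) (hSy : Sy.PosSemidef)
    (φ : ℝ → ℂ)
    (hXell : ∀ t : Fin n → ℝ,
      charFn P X t = Complex.exp (((∑ i, t i * μ i : ℝ) : ℂ) * Complex.I) * φ (t ⬝ᵥ Sx *ᵥ t))
    (hYell : ∀ t : Fin n → ℝ,
      charFn P Y t = Complex.exp (((∑ i, t i * μ i : ℝ) : ℂ) * Complex.I) * φ (t ⬝ᵥ Sy *ᵥ t))
    (hle : (centeringMatrix n * Sy * (centeringMatrix n)ᵀ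
            - centeringMatrix n * Sx * (centeringMatrix n)ᵀ).PosSemidef) :
    (∀ t : ℝ, P {ω | t < gini (centeringMatrix n *ᵥ X ω - centeringMatrix n *ᵥ μ)}
        ≤ P {ω | t < gini (centeringMatrix n *ᵥ Y ω - centeringMatrix n *ᵥ μ)}) ∧
    (∀ c : ℝ, μ = (fun _ => c) →
      ∀ t : ℝ, P {ω | t < gini (X ω)} ≤ P {ω | t < gini (Y ω)}) := by
  have hst := gini_st_order_elliptical_centering_general P P X Y hX hY μ Sx Sy hSx φ hXell hYell
    (centeringMatrix n) hle continuous_gini absConvex_gini_le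
  refine ⟨hst, fun c hc t ↦ ?_⟩
  subst hc
  simpa only [gini_centeringMatrix_mulVec_sub_const] using hst t
end

section
/- Let X_1 and X_2 be independent standard normal random variables (each N(0,1)). Then lim_{t→∞} (1/t²)·log P(2|X_1 − X_2| > t) = −1/16. (Here 2|X_1 − X_2| equals the unnormalized Gini sum S_2(X) = ∑_{i=1}^2 (4i − 6) X_{(i)} of the bivariate standard normal vector X = (X_1, X_2).) -/
open MeasureTheory ProbabilityTheory Filter

/-!
The difference of independent normal variables is again normal, so the claim is about the two-sided
tail of a single normal variable `D` of mean `m` and variance `v`. The Chernoff bound on both sides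
gives `P(s < |D|) ≤ 2 exp (-(s - |m|)² / (2v))` for `s ≥ |m|`. In the other direction, for `s ≥ m`,
`P(s < |D|)` is at least the mass of `(s, s + 1]`, hence at least the density at `s + 1`. Shifts and
constant factors are invisible on the scale `s²`, so both bounds give the rate `-1 / (2v)`.
-/

open scoped NNReal Topology

section GaussianRate

lemma tendsto_log_mul_exp_neg_sq_div_sq {C : ℝ} (hC : C ≠ 0) (a k : ℝ) :
    Tendsto (fun t : ℝ ↦ Real.log (C * Real.exp (-(t + a) ^ 2 / k)) / t ^ 2) atTop
      (𝓝 (-1 / k)) := by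
  have hinv : Tendsto (fun t : ℝ ↦ t⁻¹) atTop (𝓝 0) := tendsto_inv_atTop_zero
  have hlim : Tendsto (fun t : ℝ ↦ Real.log C * t⁻¹ ^ 2 - (1 + a * t⁻¹) ^ 2 / k) atTop
      (𝓝 (-1 / k)) := by
    convert ((hinv.pow 2).const_mul (Real.log C)).sub
      ((((hinv.const_mul a).const_add 1).pow 2).div_const k) using 2
    ring
  refine hlim.congr' ?_
  filter_upwards [eventually_ne_atTop 0] with t ht
  rw [Real.log_mul hC (Real.exp_ne_zero _), Real.log_exp]
  field

lemma tendsto_log_div_sq_of_mul_exp_neg_sq_le {p : ℝ → ℝ} {c C a b k : ℝ} (hc : 0 < c)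
    (hC : 0 < C) (hlower : ∀ᶠ t in atTop, c * Real.exp (-(t + a) ^ 2 / k) ≤ p t)
    (hupper : ∀ᶠ t in atTop, p t ≤ C * Real.exp (-(t + b) ^ 2 / k)) :
    Tendsto (fun t ↦ Real.log (p t) / t ^ 2) atTop (𝓝 (-1 / k)) := by
  refine tendsto_of_tendsto_of_tendsto_of_le_of_le'
    (tendsto_log_mul_exp_neg_sq_div_sq hc.ne' a k)
    (tendsto_log_mul_exp_neg_sq_div_sq hC.ne' b k) ?_ ?_
  · filter_upwards [hlower] with t ht
    gcongr
  · filter_upwards [hlower, hupper] with t htl htu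
    have hp : 0 < p t := lt_of_lt_of_le (by positivity) htl
    gcongr

end GaussianRate

section GaussianTail

lemma hasSubgaussianMGF_sub_mean_gaussianReal (m : ℝ) (v : ℝ≥0) :
    HasSubgaussianMGF (fun x ↦ x - m) v (gaussianReal m v) := by
  have hlaw : HasLaw (fun x ↦ x - m) (gaussianReal 0 v) (gaussianReal m v) := by
    simpa using gaussianReal_sub_const (HasLaw.id (μ := gaussianReal m v)) m
  refine ⟨fun t ↦ ?_, fun t ↦ ?_⟩
  · have h := integrable_exp_mul_gaussianReal (μ := 0) (v := v) t
    rw [← hlaw.map_eq] at h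
    exact h.comp_aemeasurable hlaw.aemeasurable
  · rw [mgf_gaussianReal hlaw.map_eq]
    simp

lemma measureReal_le_abs_le_of_hasSubgaussianMGF {Ω : Type*} [MeasurableSpace Ω] {P : Measure Ω}
    {X : Ω → ℝ} {c : ℝ≥0} (hX : HasSubgaussianMGF X c P) {ε : ℝ} (hε : 0 ≤ ε) :
    P.real {ω | ε ≤ |X ω|} ≤ 2 * Real.exp (-ε ^ 2 / (2 * c)) :=
  calc P.real {ω | ε ≤ |X ω|}
    _ = P.real ({ω | ε ≤ X ω} ∪ {ω | ε ≤ (-X) ω}) := by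
      simp only [le_abs, Set.ofPred_or, Pi.neg_apply]
    _ ≤ P.real {ω | ε ≤ X ω} + P.real {ω | ε ≤ (-X) ω} := measureReal_union_le _ _
    _ ≤ 2 * Real.exp (-ε ^ 2 / (2 * c)) := by
      linarith [hX.measure_ge_le hε, hX.neg.measure_ge_le hε]

lemma gaussianReal_real_lt_abs_le {m s : ℝ} (v : ℝ≥0) (hs : |m| ≤ s) :
    (gaussianReal m v).real {x | s < |x|} ≤ 2 * Real.exp (-(s - |m|) ^ 2 / (2 * v)) := by
  refine (measureReal_mono fun x hx ↦ ?_).trans (measureReal_le_abs_le_of_hasSubgaussianMGF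
    (hasSubgaussianMGF_sub_mean_gaussianReal m v) (sub_nonneg.2 hs))
  rw [Set.mem_ofPred_eq] at hx ⊢
  linarith [abs_sub_abs_le_abs_sub x m]

lemma gaussianPDFReal_antitoneOn (m : ℝ) (v : ℝ≥0) :
    AntitoneOn (gaussianPDFReal m v) (Set.Ici m) := by
  intro x hx y _ hxy
  have hx' : 0 ≤ x - m := sub_nonneg.2 hx
  simp only [gaussianPDFReal]
  gcongr

lemma sub_mul_gaussianPDFReal_le_gaussianReal_real_Ioc {m a b : ℝ} {v : ℝ≥0} (hv : v ≠ 0)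
    (hma : m ≤ a) (hab : a ≤ b) :
    (b - a) * gaussianPDFReal m v b ≤ (gaussianReal m v).real (Set.Ioc a b) := by
  rw [measureReal_def, gaussianReal_apply_eq_integral m hv,
    ENNReal.toReal_ofReal (integral_nonneg fun x ↦ gaussianPDFReal_nonneg m v x)]
  have h := setIntegral_ge_of_const_le (μ := volume) measurableSet_Ioc measure_Ioc_lt_top.ne
    (fun x (hx : x ∈ Set.Ioc a b) ↦ gaussianPDFReal_antitoneOn m v (hma.trans hx.1.le)
      (hma.trans hab) hx.2) (integrable_gaussianPDFReal m v).integrableOn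
  rwa [Real.volume_real_Ioc_of_le hab, smul_eq_mul] at h

lemma gaussianPDFReal_add_one_le_gaussianReal_real_lt_abs {m s : ℝ} {v : ℝ≥0} (hv : v ≠ 0)
    (hs : m ≤ s) :
    gaussianPDFReal m v (s + 1) ≤ (gaussianReal m v).real {x | s < |x|} :=
  calc gaussianPDFReal m v (s + 1)
    _ = (s + 1 - s) * gaussianPDFReal m v (s + 1) := by ring
    _ ≤ (gaussianReal m v).real (Set.Ioc s (s + 1)) :=
      sub_mul_gaussianPDFReal_le_gaussianReal_real_Ioc hv hs (by linarith)
    _ ≤ (gaussianReal m v).real {x | s < |x|} :=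
      measureReal_mono fun x hx ↦ hx.1.trans_le (le_abs_self x)

theorem tendsto_log_gaussianReal_real_lt_abs_div_sq (m : ℝ) {v : ℝ≥0} (hv : v ≠ 0) :
    Tendsto (fun s ↦ Real.log ((gaussianReal m v).real {x | s < |x|}) / s ^ 2) atTop
      (𝓝 (-1 / (2 * v))) := by
  refine tendsto_log_div_sq_of_mul_exp_neg_sq_le (c := (√(2 * Real.pi * v))⁻¹) (a := 1 - m)
    (b := -|m|) (by positivity) two_pos ?_ ?_
  · filter_upwards [eventually_ge_atTop m] with s hs
    simpa only [gaussianPDFReal, add_sub_assoc] using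
      gaussianPDFReal_add_one_le_gaussianReal_real_lt_abs hv hs
  · filter_upwards [eventually_ge_atTop |m|] with s hs
    simpa only [sub_eq_add_neg] using gaussianReal_real_lt_abs_le v hs

end GaussianTail

section Difference

variable {Ω : Type*} [MeasurableSpace Ω] {P : Measure Ω} {X₁ X₂ : Ω → ℝ} {m₁ m₂ : ℝ} {v₁ v₂ : ℝ≥0}

lemma hasLaw_sub_gaussianReal_of_indepFun (h₁ : HasLaw X₁ (gaussianReal m₁ v₁) P)
    (h₂ : HasLaw X₂ (gaussianReal m₂ v₂) P) (hind : IndepFun X₁ X₂ P) :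
    HasLaw (X₁ - X₂) (gaussianReal (m₁ - m₂) (v₁ + v₂)) P where
  aemeasurable := h₁.aemeasurable.sub h₂.aemeasurable
  map_eq := by
    simpa only [sub_eq_add_neg] using gaussianReal_add_gaussianReal_of_indepFun hind.neg_right
      h₁.map_eq (gaussianReal_neg h₂).map_eq

theorem gini_large_deviation_bivariate_standard_normal_general
    (h₁ : HasLaw X₁ (gaussianReal m₁ v₁) P) (h₂ : HasLaw X₂ (gaussianReal m₂ v₂) P)
    (hind : IndepFun X₁ X₂ P) (hv : v₁ + v₂ ≠ 0) :
    Tendsto (fun t : ℝ ↦ Real.log (P.real {ω | t < 2 * |X₁ ω - X₂ ω|}) / t ^ 2) atTop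
      (𝓝 (-1 / (8 * (v₁ + v₂)))) := by
  have hlaw : HasLaw (fun ω ↦ 2 * (X₁ ω - X₂ ω))
      (gaussianReal (2 * (m₁ - m₂)) (4 * (v₁ + v₂))) P := by
    convert gaussianReal_const_mul (hasLaw_sub_gaussianReal_of_indepFun h₁ h₂ hind) 2
    · rw [Pi.sub_apply]
    · rw [← NNReal.coe_inj, NNReal.coe_mk]
      norm_num
  have htail (t : ℝ) : P.real {ω | t < 2 * |X₁ ω - X₂ ω|} =
      (gaussianReal (2 * (m₁ - m₂)) (4 * (v₁ + v₂))).real {x | t < |x|} := by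
    simpa only [abs_mul, abs_two] using hlaw.measureReal_eq (p := fun x ↦ t < |x|)
      (measurableSet_lt measurable_const measurable_abs)
  simp only [htail]
  convert tendsto_log_gaussianReal_real_lt_abs_div_sq _ (mul_ne_zero four_ne_zero hv) using 3
  push_cast
  ring

end Difference

/-- if `X₁, X₂` are independent standard normal random variables, then
`lim_{t→∞} (1/t²)·log P(2|X₁ − X₂| > t) = −1/16`.
(Here `2|X₁ − X₂|` is the unnormalized Gini sum `S₂(X)` of `X = (X₁, X₂)`.) -/
theorem gini_large_deviation_bivariate_standard_normal {Ω : Type*} [MeasurableSpace Ω]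
    (P : Measure Ω) [IsProbabilityMeasure P]
    (X₁ X₂ : Ω → ℝ) (hX₁ : Measurable X₁) (hX₂ : Measurable X₂)
    (h₁ : Measure.map X₁ P = gaussianReal 0 1)
    (h₂ : Measure.map X₂ P = gaussianReal 0 1)
    (hind : IndepFun X₁ X₂ P) :
    Tendsto (fun t : ℝ => Real.log (P {ω | t < 2 * |X₁ ω - X₂ ω|}).toReal / t ^ 2)
      atTop (nhds (-1 / 16)) := by
  have hrate : (-1 / 16 : ℝ) = -1 / (8 * ((1 : ℝ≥0) + (1 : ℝ≥0))) := by norm_num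
  rw [hrate]
  exact gini_large_deviation_bivariate_standard_normal_general
    ⟨hX₁.aemeasurable, h₁⟩ ⟨hX₂.aemeasurable, h₂⟩ hind (by norm_num)
end
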